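/- The image of the p-mechanical bracket under the Schrödinger representation is a scalar multiple of the operator commutator: let ℏ > 0, let k₁, k₂ be Schwartz functions on ℝ³, let c = k₁*k₂ − k₂*k₁ (Heisenberg-group convolution) and let (Ac)(s, x, y) = ∫_{−∞}^{s} c(t, x, y) dt be its antiderivative in s. Then Ac is integrable on ℝ³ and for every f ∈ L²(ℝ,ℂ): σ_ℏ(Ac)f = −(2iℏ)⁻¹·(σ_ℏ(k₁)(σ_ℏ(k₂)f) − σ_ℏ(k₂)(σ_ℏ(k₁)f)), where σ_ℏ(k)f = ∫_{ℝ³} k(g)·(σ_ℏ(g)f) dg (Bochner integral). -/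

import Mathlib

open MeasureTheory

/-- The multiplication law of the one-dimensional Heisenberg group `H¹ = ℝ³`:
`(s,x,y)·(s',x',y') = (s+s'+(xy'−yx')/2, x+x', y+y')`. -/
noncomputable def heisMul (g g' : ℝ × ℝ × ℝ) : ℝ × ℝ × ℝ :=
  (g.1 + g'.1 + (g.2.1 * g'.2.2 - g.2.2 * g'.2.1) / 2, g.2.1 + g'.2.1, g.2.2 + g'.2.2)

/-- Inversion in the Heisenberg group: `(s,x,y)⁻¹ = (−s,−x,−y)`. -/
def heisInv (h : ℝ × ℝ × ℝ) : ℝ × ℝ × ℝ := (-h.1, -h.2.1, -h.2.2)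

/-- Convolution over the Heisenberg group (with Lebesgue measure on `ℝ³` as
Haar measure): `(k₁*k₂)(g) = ∫_{H¹} k₁(h)·k₂(h⁻¹·g) dh`. -/
noncomputable def heisConv (k₁ k₂ : ℝ × ℝ × ℝ → ℂ) (g : ℝ × ℝ × ℝ) : ℂ :=
  ∫ h : ℝ × ℝ × ℝ, k₁ h * k₂ (heisMul (heisInv h) g)

/-- The convolution commutator `k₁*k₂ − k₂*k₁` on the Heisenberg group. -/
noncomputable def heisComm (k₁ k₂ : ℝ × ℝ × ℝ → ℂ) (g : ℝ × ℝ × ℝ) : ℂ :=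
  heisConv k₁ k₂ g - heisConv k₂ k₁ g

/-- The antiderivative with respect to the central variable `s`:
`(Ac)(s, x, y) = ∫_{−∞}^{s} c(t, x, y) dt`. -/
noncomputable def heisAnti (c : ℝ × ℝ × ℝ → ℂ) (w : ℝ × ℝ × ℝ) : ℂ :=
  ∫ t in Set.Iic w.1, c (t, w.2.1, w.2.2)

/-! ### The Heisenberg group law and Lebesgue measure -/

instance isAddHaarMeasure_volume_prod {G H : Type*} [AddGroup G] [TopologicalSpace G]
    [MeasureSpace G] [AddGroup H] [TopologicalSpace H] [MeasureSpace H]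
    [SFinite (volume : Measure G)] [SFinite (volume : Measure H)]
    [MeasurableAdd G] [MeasurableAdd H]
    [(volume : Measure G).IsAddHaarMeasure] [(volume : Measure H).IsAddHaarMeasure] :
    (volume : Measure (G × H)).IsAddHaarMeasure :=
  Measure.prod.instIsAddHaarMeasure volume volume

/-- Shears along the central direction, followed by a translation, preserve Lebesgue measure. -/
theorem measurePreserving_centralShear {φ : ℝ × ℝ → ℝ} (hφ : Measurable φ) (q : ℝ × ℝ) :
    MeasurePreserving (fun g : ℝ × ℝ × ℝ => (g.1 + φ g.2, q + g.2)) := by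
  have hsp : MeasurePreserving (fun z : (ℝ × ℝ) × ℝ => (q + z.1, z.2 + φ z.1))
      (volume.prod volume) (volume.prod volume) :=
    (measurePreserving_add_left volume q).skew_product
      (g := fun p t => t + φ p) (by fun_prop)
      (ae_of_all _ fun p => (measurePreserving_add_right volume (φ p)).map_eq)
  exact (Measure.measurePreserving_swap.comp hsp).comp Measure.measurePreserving_swap

theorem measurePreserving_heisMul_left (h : ℝ × ℝ × ℝ) : MeasurePreserving (heisMul h) := by
  convert measurePreserving_centralShear
    (φ := fun p => h.1 + (h.2.1 * p.2 - h.2.2 * p.1) / 2) (by fun_prop) h.2 using 1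
  ext g <;> simp [heisMul]; ring

theorem measurePreserving_heisMul_right (h : ℝ × ℝ × ℝ) :
    MeasurePreserving (fun g => heisMul g h) := by
  convert measurePreserving_centralShear
    (φ := fun p => h.1 + (p.1 * h.2.2 - p.2 * h.2.1) / 2) (by fun_prop) h.2 using 1
  ext g <;> simp [heisMul] <;> ring

theorem measurable_heisMul : Measurable fun z : (ℝ × ℝ × ℝ) × (ℝ × ℝ × ℝ) => heisMul z.1 z.2 := by
  unfold heisMul; fun_prop

theorem heisMul_heisInv_cancel_left (h g : ℝ × ℝ × ℝ) :
    heisMul h (heisMul (heisInv h) g) = g := by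
  ext <;> simp [heisMul, heisInv]; ring

theorem heisInv_heisMul_cancel_left (h g : ℝ × ℝ × ℝ) :
    heisMul (heisInv h) (heisMul h g) = g := by
  ext <;> simp [heisMul, heisInv]; ring

theorem heisMul_heisInv_heisMul_heisInv (h g : ℝ × ℝ × ℝ) :
    heisMul (heisInv (heisMul g (heisInv h))) g = h := by
  ext <;> simp [heisMul, heisInv]; ring

/-- The map `(h, g) ↦ (h, h⁻¹·g)` preserves Lebesgue measure. -/
theorem measurePreserving_heisInv_heisMul :
    MeasurePreserving (fun z : (ℝ × ℝ × ℝ) × (ℝ × ℝ × ℝ) => (z.1, heisMul (heisInv z.1) z.2))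
      (volume.prod volume) (volume.prod volume) :=
  (MeasurePreserving.id volume).skew_product
    (g := fun h g => heisMul (heisInv h) g)
    (measurable_heisMul.comp (f := fun z : (ℝ × ℝ × ℝ) × (ℝ × ℝ × ℝ) => (-z.1, z.2))
      (by fun_prop))
    (ae_of_all _ fun h => (measurePreserving_heisMul_left (heisInv h)).map_eq)

/-- The map `h ↦ g·h⁻¹` preserves Lebesgue measure. -/
theorem measurePreserving_heisMul_heisInv (g : ℝ × ℝ × ℝ) :
    MeasurePreserving (fun h => heisMul g (heisInv h)) :=
  have hneg := Measure.measurePreserving_neg (volume : Measure ℝ)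
  (measurePreserving_heisMul_left g).comp (hneg.prod (hneg.prod hneg))

/-- The convolution written with the second factor unshifted. -/
theorem heisConv_eq_integral_mul_heisInv (k₁ k₂ : ℝ × ℝ × ℝ → ℂ) (g : ℝ × ℝ × ℝ) :
    heisConv k₁ k₂ g = ∫ h : ℝ × ℝ × ℝ, k₂ h * k₁ (heisMul g (heisInv h)) := by
  let e : (ℝ × ℝ × ℝ) ≃ᵐ (ℝ × ℝ × ℝ) :=
    { toFun := fun h => heisMul g (heisInv h)
      invFun := fun h => heisMul (heisInv h) g
      left_inv := fun h => heisMul_heisInv_heisMul_heisInv h g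
      right_inv := fun h => by ext <;> simp [heisMul, heisInv]; ring
      measurable_toFun := (measurePreserving_heisMul_heisInv g).measurable
      measurable_invFun := by
        change Measurable fun h => heisMul (heisInv h) g
        unfold heisMul heisInv; fun_prop }
  have := (show MeasurePreserving e from measurePreserving_heisMul_heisInv g).integral_comp'
    (fun h => k₁ h * k₂ (heisMul (heisInv h) g))
  rw [heisConv, ← this]
  refine integral_congr_ae (ae_of_all _ fun h => ?_)
  change k₁ (heisMul g (heisInv h)) * k₂ (heisMul (heisInv (heisMul g (heisInv h))) g) = _
  rw [heisMul_heisInv_heisMul_heisInv, mul_comm]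

/-! ### Integrability of convolutions -/

theorem integrable_heisConv_integrand {k₁ k₂ : ℝ × ℝ × ℝ → ℂ} (h₁ : Integrable k₁)
    (h₂ : Integrable k₂) :
    Integrable (fun z : (ℝ × ℝ × ℝ) × (ℝ × ℝ × ℝ) => k₁ z.1 * k₂ (heisMul (heisInv z.1) z.2))
      (volume.prod volume) :=
  measurePreserving_heisInv_heisMul.integrable_comp_of_integrable (h₁.mul_prod h₂)

theorem integrable_heisConv {k₁ k₂ : ℝ × ℝ × ℝ → ℂ} (h₁ : Integrable k₁) (h₂ : Integrable k₂) :
    Integrable (heisConv k₁ k₂) :=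
  (integrable_heisConv_integrand h₁ h₂).integral_prod_right

/-- Integrability of `k` together with its products with the three coordinates. -/
structure IntegrableFirstMoments (k : ℝ × ℝ × ℝ → ℂ) : Prop where
  integrable : Integrable k
  fst : Integrable fun g => (g.1 : ℂ) * k g
  snd_fst : Integrable fun g => (g.2.1 : ℂ) * k g
  snd_snd : Integrable fun g => (g.2.2 : ℂ) * k g

theorem SchwartzMap.integrableFirstMoments (k : SchwartzMap (ℝ × ℝ × ℝ) ℂ) :
    IntegrableFirstMoments k := by
  have key : ∀ c : ℝ × ℝ × ℝ → ℝ, Continuous c → (∀ g, |c g| ≤ ‖g‖) →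
      Integrable fun g => (c g : ℂ) * k g := fun c hc hle => by
    refine (k.integrable_pow_mul volume 1).mono
      ((Complex.continuous_ofReal.comp hc).mul k.continuous).aestronglyMeasurable
      (ae_of_all _ fun g => ?_)
    have := mul_le_mul_of_nonneg_right (hle g) (norm_nonneg (k g))
    simpa using this
  refine ⟨k.integrable, key _ (by fun_prop) fun g => norm_fst_le g,
    key _ (by fun_prop) fun g => (norm_fst_le g.2).trans (norm_snd_le g),
    key _ (by fun_prop) fun g => (norm_snd_le g.2).trans (norm_snd_le g)⟩

theorem integrable_fst_mul_heisConv {k₁ k₂ : ℝ × ℝ × ℝ → ℂ} (h₁ : IntegrableFirstMoments k₁)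
    (h₂ : IntegrableFirstMoments k₂) :
    Integrable fun g => (g.1 : ℂ) * heisConv k₁ k₂ g := by
  have hsum : Integrable (fun z : (ℝ × ℝ × ℝ) × (ℝ × ℝ × ℝ) =>
      ((heisMul z.1 z.2).1 : ℂ) * (k₁ z.1 * k₂ z.2)) (volume.prod volume) := by
    convert! (((h₁.fst.mul_prod h₂.integrable).add (h₁.integrable.mul_prod h₂.fst)).add
      (((h₁.snd_fst.mul_prod h₂.snd_snd).sub
        (h₁.snd_snd.mul_prod h₂.snd_fst)).div_const 2)) using 1
    ext z
    simp only [heisMul, Pi.add_apply, Pi.sub_apply]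
    push_cast
    ring
  have := (measurePreserving_heisInv_heisMul.integrable_comp_of_integrable
    hsum).integral_prod_right
  refine this.congr (ae_of_all _ fun g => ?_)
  simp only [Function.comp_apply, heisMul_heisInv_cancel_left]
  rw [integral_const_mul, heisConv]

/-! ### The central integral of a convolution is commutative -/

/-- Integrability over `H¹ × H¹` passes to almost every fibre of the projection of the second
factor onto its two last coordinates. -/
theorem ae_integrable_centralFibre {F : (ℝ × ℝ × ℝ) × (ℝ × ℝ × ℝ) → ℂ}
    (hF : Integrable F (volume.prod volume)) :
    ∀ᵐ p : ℝ × ℝ, Integrable (fun z : (ℝ × ℝ × ℝ) × ℝ => F (z.1, z.2, p))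
      (volume.prod volume) := by
  have hmp : MeasurePreserving
      (fun w : (ℝ × ℝ) × ((ℝ × ℝ × ℝ) × ℝ) => (w.2.1, w.2.2, w.1))
      (volume.prod (volume.prod volume)) (volume.prod (volume.prod volume)) :=
    (measurePreserving_prodAssoc volume volume volume).comp Measure.measurePreserving_swap
  exact (hmp.integrable_comp_of_integrable hF).prod_right_ae

theorem ae_integral_heisConv_fst_comm {k₁ k₂ : ℝ × ℝ × ℝ → ℂ} (h₁ : Integrable k₁)
    (h₂ : Integrable k₂) :
    ∀ᵐ p : ℝ × ℝ, ∫ t : ℝ, heisConv k₁ k₂ (t, p) = ∫ t : ℝ, heisConv k₂ k₁ (t, p) := by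
  have hshift : ∀ (h : ℝ × ℝ × ℝ) (p : ℝ × ℝ),
      ∫ t : ℝ, k₁ (heisMul (t, p) (heisInv h)) = ∫ t : ℝ, k₁ (t, p - h.2) ∧
      ∫ t : ℝ, k₁ (heisMul (heisInv h) (t, p)) = ∫ t : ℝ, k₁ (t, p - h.2) := fun h p => by
    constructor
    · rw [← integral_add_right_eq_self (fun t => k₁ (t, p - h.2))
        (-h.1 + (p.1 * -h.2.2 - p.2 * -h.2.1) / 2)]
      refine integral_congr_ae (ae_of_all _ fun t => congrArg k₁ ?_)
      ext <;> simp [heisMul, heisInv] <;> ring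
    · rw [← integral_add_right_eq_self (fun t => k₁ (t, p - h.2))
        (-h.1 + (-h.2.1 * p.2 - -h.2.2 * p.1) / 2)]
      refine integral_congr_ae (ae_of_all _ fun t => congrArg k₁ ?_)
      ext <;> simp [heisMul, heisInv] <;> ring
  have hright : Integrable (fun z : (ℝ × ℝ × ℝ) × (ℝ × ℝ × ℝ) =>
      k₂ z.1 * k₁ (heisMul z.2 (heisInv z.1))) (volume.prod volume) := by
    have hmp : MeasurePreserving
        (fun z : (ℝ × ℝ × ℝ) × (ℝ × ℝ × ℝ) => (z.1, heisMul z.2 (heisInv z.1)))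
        (volume.prod volume) (volume.prod volume) :=
      (MeasurePreserving.id volume).skew_product
        (g := fun h g => heisMul g (heisInv h))
        (measurable_heisMul.comp (f := fun z : (ℝ × ℝ × ℝ) × (ℝ × ℝ × ℝ) => (z.2, -z.1))
          (by fun_prop))
        (ae_of_all _ fun h => (measurePreserving_heisMul_right (heisInv h)).map_eq)
    exact hmp.integrable_comp_of_integrable (h₂.mul_prod h₁)
  filter_upwards [ae_integrable_centralFibre (integrable_heisConv_integrand h₂ h₁),
    ae_integrable_centralFibre hright] with p hl hr
  simp_rw [heisConv_eq_integral_mul_heisInv k₁ k₂, heisConv]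
  rw [← integral_integral_swap (f := fun h t => k₂ h * k₁ (heisMul (heisInv h) (t, p))) hl,
    ← integral_integral_swap (f := fun h t => k₂ h * k₁ (heisMul (t, p) (heisInv h))) hr]
  simp_rw [integral_const_mul, (hshift _ p).1, (hshift _ p).2]

theorem ae_integral_heisComm_fst_eq_zero {k₁ k₂ : ℝ × ℝ × ℝ → ℂ} (h₁ : Integrable k₁)
    (h₂ : Integrable k₂) :
    ∀ᵐ p : ℝ × ℝ, ∫ t : ℝ, heisComm k₁ k₂ (t, p) = 0 := by
  filter_upwards [ae_integral_heisConv_fst_comm h₁ h₂,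
    Integrable.prod_left_ae (μ := volume) (ν := volume) (integrable_heisConv h₁ h₂),
    Integrable.prod_left_ae (μ := volume) (ν := volume) (integrable_heisConv h₂ h₁)]
    with p hp h₁₂ h₂₁
  simp_rw [heisComm]
  rw [integral_sub h₁₂ h₂₁, hp, sub_self]

/-! ### The antiderivative in the central variable -/

/-- The kernel `1_{t < s} - 1_{0 < s}`, through which the antiderivative of a function of
mean zero is an integral operator. -/
noncomputable def centralKernel (s t : ℝ) : ℝ :=
  (Set.Ioc t 0).indicator 1 s - (Set.Ioc 0 t).indicator 1 s

theorem centralKernel_eq (s t : ℝ) :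
    centralKernel s t = (Set.Iio s).indicator 1 t - (Set.Ioi 0).indicator 1 s := by
  simp only [centralKernel, Set.indicator_apply, Set.mem_Ioc, Set.mem_Iio, Set.mem_Ioi,
    Pi.one_apply]
  split_ifs <;> grind

theorem measurable_centralKernel : Measurable fun z : ℝ × ℝ => centralKernel z.1 z.2 := by
  simp_rw [centralKernel_eq]
  refine Measurable.sub ?_ ((measurable_one.indicator measurableSet_Ioi).comp measurable_fst)
  exact (measurable_one (α := ℝ)).indicator
    (measurableSet_lt (measurable_snd (α := ℝ) (β := ℝ)) measurable_fst)

theorem abs_centralKernel (s t : ℝ) :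
    |centralKernel s t| = (Set.Ioc t 0).indicator 1 s + (Set.Ioc 0 t).indicator 1 s := by
  simp only [centralKernel, Set.indicator_apply, Set.mem_Ioc, Pi.one_apply]
  split_ifs <;> grind

theorem integral_centralKernel_mul {ψ : ℝ → ℂ} (hψ : Continuous ψ) (t : ℝ) :
    ∫ s, (centralKernel s t : ℂ) * ψ s = -∫ s in (0 : ℝ)..t, ψ s := by
  have hint : ∀ a b : ℝ, Integrable ((Set.Ioc a b).indicator ψ) := fun a b =>
    (hψ.integrableOn_Ioc).integrable_indicator measurableSet_Ioc
  rw [intervalIntegral, neg_sub, ← integral_indicator measurableSet_Ioc,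
    ← integral_indicator measurableSet_Ioc, ← integral_sub (hint _ _) (hint _ _)]
  refine integral_congr_ae (ae_of_all _ fun s => ?_)
  simp only [centralKernel, Set.indicator_apply, Pi.one_apply]
  split_ifs <;> simp

theorem integrable_centralKernel (t : ℝ) : Integrable fun s => centralKernel s t :=
  ((integrable_indicator_iff measurableSet_Ioc).2 (by simp [Pi.one_def])).sub
    ((integrable_indicator_iff measurableSet_Ioc).2 (by simp [Pi.one_def]))

theorem integral_abs_centralKernel (t : ℝ) : ∫ s, |centralKernel s t| = |t| := by
  simp_rw [abs_centralKernel]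
  rw [integral_add ((integrable_indicator_iff measurableSet_Ioc).2 (by simp [Pi.one_def]))
    ((integrable_indicator_iff measurableSet_Ioc).2 (by simp [Pi.one_def])),
    integral_indicator_one measurableSet_Ioc, integral_indicator_one measurableSet_Ioc]
  rcases le_total 0 t with h | h <;> simp [h, abs_of_nonneg, abs_of_nonpos]

theorem heisAnti_eq_integral_centralKernel {C : ℝ × ℝ × ℝ → ℂ} {p : ℝ × ℝ}
    (hC : Integrable fun t : ℝ => C (t, p)) (h0 : ∫ t : ℝ, C (t, p) = 0) (s : ℝ) :
    heisAnti C (s, p) = ∫ t, (centralKernel s t : ℂ) * C (t, p) := by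
  have hsplit : ∀ t, (centralKernel s t : ℂ) * C (t, p) =
      (Set.Iio s).indicator (fun t => C (t, p)) t -
        (((Set.Ioi (0 : ℝ)).indicator 1 s : ℝ) : ℂ) * C (t, p) := fun t => by
    rw [centralKernel_eq]
    by_cases ht : t ∈ Set.Iio s <;> simp [ht, sub_mul]
  simp_rw [hsplit]
  rw [integral_sub (hC.indicator measurableSet_Iio) (hC.const_mul _), integral_const_mul, h0,
    mul_zero, sub_zero, integral_indicator measurableSet_Iio, ← integral_Iic_eq_integral_Iio]
  rfl

/-- Exchanging the central coordinate with an extra real variable preserves measure. -/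
theorem measurePreserving_exchangeCentral :
    MeasurePreserving (fun w : (ℝ × ℝ × ℝ) × ℝ => ((w.2, w.1.2), w.1.1))
      (volume.prod volume) (volume.prod volume) :=
  Measure.measurePreserving_swap.comp <|
    ((MeasurePreserving.id (volume : Measure ℝ)).prod Measure.measurePreserving_swap).comp <|
      measurePreserving_prodAssoc (volume : Measure ℝ) (volume : Measure (ℝ × ℝ))
        (volume : Measure ℝ)

theorem integrable_centralKernel_mul {C : ℝ × ℝ × ℝ → ℂ} (hC : Integrable C)
    (hsC : Integrable fun g => (g.1 : ℂ) * C g) :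
    Integrable (fun w : (ℝ × ℝ × ℝ) × ℝ => (centralKernel w.2 w.1.1 : ℂ) * C w.1)
      (volume.prod volume) := by
  have hmeas : AEStronglyMeasurable
      (fun w : (ℝ × ℝ × ℝ) × ℝ => (centralKernel w.2 w.1.1 : ℂ) * C w.1)
      (volume.prod volume) := by
    refine AEStronglyMeasurable.mul (β := ℂ) ?_ hC.aestronglyMeasurable.comp_fst
    exact (Complex.measurable_ofReal.comp (measurable_centralKernel.comp
      (f := fun w : (ℝ × ℝ × ℝ) × ℝ => (w.2, w.1.1)) (by fun_prop))).aestronglyMeasurable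
  refine (integrable_prod_iff hmeas).2 ⟨ae_of_all _ fun g => ?_, ?_⟩
  · exact ((integrable_centralKernel g.1).ofReal (𝕜 := ℂ)).mul_const (C g)
  · simp_rw [norm_mul, Complex.norm_real, Real.norm_eq_abs, integral_mul_const,
      integral_abs_centralKernel]
    simpa using hsC.norm

theorem integrable_centralKernel_mul_exchanged {C : ℝ × ℝ × ℝ → ℂ} (hC : Integrable C)
    (hsC : Integrable fun g => (g.1 : ℂ) * C g) :
    Integrable (fun w : (ℝ × ℝ × ℝ) × ℝ => (centralKernel w.1.1 w.2 : ℂ) * C (w.2, w.1.2))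
      (volume.prod volume) :=
  measurePreserving_exchangeCentral.integrable_comp_of_integrable
    (integrable_centralKernel_mul hC hsC)

theorem ae_heisAnti_eq {C : ℝ × ℝ × ℝ → ℂ} (hC : Integrable C)
    (h0 : ∀ᵐ p : ℝ × ℝ, ∫ t : ℝ, C (t, p) = 0) :
    ∀ᵐ g : ℝ × ℝ × ℝ, heisAnti C g = ∫ t, (centralKernel g.1 t : ℂ) * C (t, g.2) := by
  have hp : ∀ᵐ p : ℝ × ℝ, ∀ s, heisAnti C (s, p) = ∫ t, (centralKernel s t : ℂ) * C (t, p) := by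
    filter_upwards [h0, Integrable.prod_left_ae (μ := volume) (ν := volume) hC] with p hp hCp s
    exact heisAnti_eq_integral_centralKernel hCp hp s
  have := (Measure.quasiMeasurePreserving_snd (μ := (volume : Measure ℝ))
    (ν := (volume : Measure (ℝ × ℝ)))).ae hp
  filter_upwards [this] with g hg using hg g.1

theorem integrable_heisAnti {C : ℝ × ℝ × ℝ → ℂ} (hC : Integrable C)
    (hsC : Integrable fun g => (g.1 : ℂ) * C g)
    (h0 : ∀ᵐ p : ℝ × ℝ, ∫ t : ℝ, C (t, p) = 0) : Integrable (heisAnti C) :=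
  (integrable_centralKernel_mul_exchanged hC hsC).integral_prod_left.congr
    ((ae_heisAnti_eq hC h0).mono fun _ h => h.symm)

/-- Integrating the central antiderivative of `C` against a function on which the centre acts
by the character `s ↦ exp (i ω s)` amounts to integrating `-(i ω)⁻¹ C`. -/
theorem integral_heisAnti_smul {E : Type*} [NormedAddCommGroup E] [NormedSpace ℂ E]
    {C : ℝ × ℝ × ℝ → ℂ} (hC : Integrable C)
    (hsC : Integrable fun g => (g.1 : ℂ) * C g)
    (h0 : ∀ᵐ p : ℝ × ℝ, ∫ t : ℝ, C (t, p) = 0)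
    {V : ℝ × ℝ × ℝ → E} (hV : AEStronglyMeasurable V) {M : ℝ} (hM : ∀ g, ‖V g‖ ≤ M)
    {ω : ℂ} (hω : ω ≠ 0)
    (hchar : ∀ s p, V (s, p) = Complex.exp (ω * s) • V (0, p)) :
    ∫ g, heisAnti C g • V g = (-ω⁻¹) • ∫ g, C g • V g := by
  by_cases hE : CompleteSpace E
  swap
  · simp [integral, hE]
  have hV0 : AEStronglyMeasurable fun g : ℝ × ℝ × ℝ => V (0, g.2) := by
    have : (fun g : ℝ × ℝ × ℝ => V (0, g.2)) = fun g => Complex.exp (-(ω * g.1)) • V g := by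
      ext1 ⟨s, p⟩
      rw [hchar s p, smul_smul, ← Complex.exp_add, neg_add_cancel, Complex.exp_zero, one_smul]
    rw [this]
    exact (Continuous.aestronglyMeasurable (by fun_prop)).smul hV
  have hCV0 : Integrable fun g : ℝ × ℝ × ℝ => C g • V (0, g.2) :=
    hC.smul_bdd M hV0 (ae_of_all _ fun g => hM _)
  have hCV : Integrable fun g : ℝ × ℝ × ℝ => C g • V g :=
    hC.smul_bdd M hV (ae_of_all _ fun g => hM _)
  have hzero : ∫ g : ℝ × ℝ × ℝ, C g • V (0, g.2) = 0 := by
    have := integral_prod_symm (μ := volume) (ν := volume) _ hCV0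
    refine (show _ = _ from this).trans (integral_eq_zero_of_ae ?_)
    filter_upwards [h0] with p hp
    simp [integral_smul_const, hp]
  have hW : Integrable (fun w : (ℝ × ℝ × ℝ) × ℝ =>
      ((centralKernel w.1.1 w.2 : ℂ) * C (w.2, w.1.2)) • V w.1) (volume.prod volume) :=
    (integrable_centralKernel_mul_exchanged hC hsC).smul_bdd M hV.comp_fst
      (ae_of_all _ fun g => hM _)
  have hW' : Integrable (fun w : (ℝ × ℝ × ℝ) × ℝ =>
      ((centralKernel w.2 w.1.1 : ℂ) * C w.1) • V (w.2, w.1.2)) (volume.prod volume) :=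
    measurePreserving_exchangeCentral.integrable_comp_of_integrable hW
  let e : ((ℝ × ℝ × ℝ) × ℝ) ≃ᵐ ((ℝ × ℝ × ℝ) × ℝ) :=
    { toFun := fun w => ((w.2, w.1.2), w.1.1)
      invFun := fun w => ((w.2, w.1.2), w.1.1)
      left_inv := fun _ => rfl
      right_inv := fun _ => rfl
      measurable_toFun := measurePreserving_exchangeCentral.measurable
      measurable_invFun := measurePreserving_exchangeCentral.measurable }
  have hexch := (show MeasurePreserving e (volume.prod volume) (volume.prod volume) from
    measurePreserving_exchangeCentral).integral_comp' (fun w : (ℝ × ℝ × ℝ) × ℝ =>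
      ((centralKernel w.1.1 w.2 : ℂ) * C (w.2, w.1.2)) • V w.1)
  calc ∫ g, heisAnti C g • V g
      = ∫ g : ℝ × ℝ × ℝ, ∫ t, ((centralKernel g.1 t : ℂ) * C (t, g.2)) • V g := by
        refine integral_congr_ae ((ae_heisAnti_eq hC h0).mono fun g hg => ?_)
        simp only [hg, integral_smul_const]
    _ = ∫ g : ℝ × ℝ × ℝ, ∫ s, ((centralKernel s g.1 : ℂ) * C g) • V (s, g.2) := by
        rw [← integral_prod _ hW, ← hexch, ← integral_prod _ hW']
        rfl
    _ = ∫ g : ℝ × ℝ × ℝ, ω⁻¹ • (C g • V (0, g.2) - C g • V g) := by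
        refine integral_congr_ae (ae_of_all _ fun g => ?_)
        have hs : ∀ s : ℝ, ((centralKernel s g.1 : ℂ) * C g) • V (s, g.2) =
            ((centralKernel s g.1 : ℂ) * Complex.exp (ω * s)) • C g • V (0, g.2) := fun s => by
          rw [hchar s g.2, smul_smul, smul_smul]
          ring_nf
        simp_rw [hs]
        rw [integral_smul_const, integral_centralKernel_mul (by fun_prop),
          integral_exp_mul_complex hω, show V g = _ from hchar g.1 g.2,
          Complex.ofReal_zero, mul_zero, Complex.exp_zero, div_eq_mul_inv]
        module
    _ = (-ω⁻¹) • ∫ g, C g • V g := by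
        rw [integral_smul, integral_sub hCV0 hCV, hzero, zero_sub, smul_neg, neg_smul]

/-! ### The Schrödinger representation -/

/-- A map into a second countable pseudo-extended-metric space is measurable as soon as its
distances to all points are. -/
theorem measurable_of_measurable_edist {X Y : Type*} [MeasurableSpace X] [PseudoEMetricSpace Y]
    [SecondCountableTopology Y] [MeasurableSpace Y] [BorelSpace Y] {F : X → Y}
    (hF : ∀ y, Measurable fun x => edist (F x) y) : Measurable F := by
  refine measurable_of_isOpen fun U hU => ?_
  choose! r hr hrU using fun y (hy : y ∈ U) => EMetric.isOpen_iff.1 hU y hy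
  obtain ⟨T, hTU, hT, hTeq⟩ := TopologicalSpace.isOpen_biUnion_countable U
    (fun y => Metric.eball y (r y)) fun _ _ => Metric.isOpen_eball
  have hU' : U = ⋃ y ∈ T, Metric.eball y (r y) := by
    rw [hTeq]
    exact Set.Subset.antisymm
      (fun y hy => Set.mem_biUnion hy (Metric.mem_eball_self (hr y hy))) (Set.iUnion₂_subset hrU)
  rw [hU', Set.preimage_iUnion₂]
  exact .biUnion hT fun y _ => measurableSet_lt (hF y) measurable_const

/-- A family of `L²` functions given by a jointly measurable function of the parameter and the
variable is strongly measurable in the parameter. -/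
theorem stronglyMeasurable_Lp_of_ae_eq {X : Type*} [MeasurableSpace X]
    {V : X → Lp ℂ 2 (volume : Measure ℝ)} {u : X × ℝ → ℂ} (hu : Measurable u)
    (hVu : ∀ x, (V x : ℝ → ℂ) =ᵐ[volume] fun t => u (x, t)) : StronglyMeasurable V := by
  borelize ↥(Lp ℂ 2 (volume : Measure ℝ))
  have : Fact ((2 : ENNReal) ≠ ⊤) := ⟨ENNReal.ofNat_ne_top⟩
  refine (measurable_of_measurable_edist fun v => ?_).stronglyMeasurable
  have hdist : ∀ x, edist (V x) v =
      (∫⁻ t, ‖u (x, t) - (v : ℝ → ℂ) t‖ₑ ^ (2 : ℝ)) ^ (1 / (2 : ℝ)) := fun x => by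
    rw [Lp.edist_def, eLpNorm_congr_ae ((hVu x).sub (ae_eq_refl _)),
      eLpNorm_eq_lintegral_rpow_enorm_toReal two_ne_zero ENNReal.ofNat_ne_top]
    simp
  simp_rw [hdist]
  refine Measurable.pow_const (Measurable.lintegral_prod_right' (f := fun z : X × ℝ =>
    ‖u z - (v : ℝ → ℂ) z.2‖ₑ ^ (2 : ℝ)) ?_) _
  exact ((hu.sub ((Lp.stronglyMeasurable v).measurable.comp measurable_snd)).enorm).pow_const _

/-- `σ` is given by the Schrödinger formula with parameter `ℏ`. -/
def IsSchrodinger (ℏ : ℝ)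
    (σ : ℝ × ℝ × ℝ → (Lp ℂ 2 (volume : Measure ℝ) ≃ₗᵢ[ℂ] Lp ℂ 2 (volume : Measure ℝ))) : Prop :=
  ∀ (s x y : ℝ) (f : Lp ℂ 2 (volume : Measure ℝ)),
    (σ (s, x, y) f : ℝ → ℂ) =ᵐ[volume] fun t : ℝ =>
      Complex.exp (Complex.I *
          ((2 * s * ℏ - Real.sqrt (2 * ℏ) * y * t + ℏ * x * y : ℝ) : ℂ)) *
        (f : ℝ → ℂ) (t - Real.sqrt (2 * ℏ) * x)

theorem IsSchrodinger.stronglyMeasurable {ℏ : ℝ}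
    {σ : ℝ × ℝ × ℝ → (Lp ℂ 2 (volume : Measure ℝ) ≃ₗᵢ[ℂ] Lp ℂ 2 (volume : Measure ℝ))}
    (hσ : IsSchrodinger ℏ σ) (f : Lp ℂ 2 (volume : Measure ℝ)) :
    StronglyMeasurable fun g => σ g f := by
  have hf : Measurable (f : ℝ → ℂ) := (Lp.stronglyMeasurable f).measurable
  refine stronglyMeasurable_Lp_of_ae_eq (u := fun z : (ℝ × ℝ × ℝ) × ℝ =>
    Complex.exp (Complex.I * ((2 * z.1.1 * ℏ - Real.sqrt (2 * ℏ) * z.1.2.2 * z.2 +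
      ℏ * z.1.2.1 * z.1.2.2 : ℝ) : ℂ)) * (f : ℝ → ℂ) (z.2 - Real.sqrt (2 * ℏ) * z.1.2.1))
    ?_ fun g => hσ g.1 g.2.1 g.2.2 f
  exact Measurable.mul (by fun_prop) (hf.comp (by fun_prop))

theorem IsSchrodinger.apply_central {ℏ : ℝ}
    {σ : ℝ × ℝ × ℝ → (Lp ℂ 2 (volume : Measure ℝ) ≃ₗᵢ[ℂ] Lp ℂ 2 (volume : Measure ℝ))}
    (hσ : IsSchrodinger ℏ σ) (f : Lp ℂ 2 (volume : Measure ℝ)) (s : ℝ) (p : ℝ × ℝ) :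
    σ (s, p) f = Complex.exp (2 * Complex.I * ℏ * s) • σ (0, p) f := by
  refine Lp.ext ?_
  filter_upwards [hσ s p.1 p.2 f, hσ 0 p.1 p.2 f,
    Lp.coeFn_smul (Complex.exp (2 * Complex.I * ℏ * s)) (σ (0, p) f)] with t h₁ h₂ h₃
  rw [h₃, Pi.smul_apply, smul_eq_mul]
  refine h₁.trans (Eq.trans ?_ (congrArg _ h₂.symm))
  rw [← mul_assoc, ← Complex.exp_add]
  congr 2
  push_cast
  ring

theorem IsSchrodinger.apply_heisMul {ℏ : ℝ}
    {σ : ℝ × ℝ × ℝ → (Lp ℂ 2 (volume : Measure ℝ) ≃ₗᵢ[ℂ] Lp ℂ 2 (volume : Measure ℝ))}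
    (hσ : IsSchrodinger ℏ σ) (hℏ : 0 ≤ ℏ) (f : Lp ℂ 2 (volume : Measure ℝ)) (g g' : ℝ × ℝ × ℝ) :
    σ g (σ g' f) = σ (heisMul g g') f := by
  obtain ⟨s, x, y⟩ := g
  obtain ⟨s', x', y'⟩ := g'
  have htrans := (measurePreserving_sub_right volume
    (Real.sqrt (2 * ℏ) * x)).quasiMeasurePreserving.ae (hσ s' x' y' f)
  refine Lp.ext ?_
  filter_upwards [hσ s x y (σ (s', x', y') f), htrans, hσ _ _ _ f] with t h₁ h₂ h₃
  refine h₁.trans (Eq.trans ?_ h₃.symm)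
  rw [h₂, ← mul_assoc, ← Complex.exp_add]
  have hsq : ((Real.sqrt (2 * ℏ) : ℝ) : ℂ) * (Real.sqrt (2 * ℏ) : ℝ) = 2 * ℏ := by
    rw [← Complex.ofReal_mul, Real.mul_self_sqrt (by positivity)]
    push_cast
    ring
  congr 2
  · push_cast
    linear_combination Complex.I * (y' * x : ℂ) * hsq
  · ring

/-- The integrated Schrödinger representation turns convolution into composition. -/
theorem IsSchrodinger.integral_heisConv {ℏ : ℝ}
    {σ : ℝ × ℝ × ℝ → (Lp ℂ 2 (volume : Measure ℝ) ≃ₗᵢ[ℂ] Lp ℂ 2 (volume : Measure ℝ))}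
    (hσ : IsSchrodinger ℏ σ) (hℏ : 0 ≤ ℏ) {k₁ k₂ : ℝ × ℝ × ℝ → ℂ}
    (h₁ : Integrable k₁) (h₂ : Integrable k₂) (f : Lp ℂ 2 (volume : Measure ℝ)) :
    ∫ g, k₁ g • σ g (∫ g', k₂ g' • σ g' f) = ∫ g, heisConv k₁ k₂ g • σ g f := by
  have hmeas := (hσ.stronglyMeasurable f).aestronglyMeasurable (μ := volume)
  have hint₂ : Integrable fun g' => k₂ g' • σ g' f :=
    h₂.smul_bdd ‖f‖ hmeas (ae_of_all _ fun g => ((σ g).norm_map f).le)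
  have hprod : Integrable (fun z : (ℝ × ℝ × ℝ) × (ℝ × ℝ × ℝ) =>
      (k₁ z.1 * k₂ (heisMul (heisInv z.1) z.2)) • σ z.2 f) (volume.prod volume) :=
    (integrable_heisConv_integrand h₁ h₂).smul_bdd ‖f‖ hmeas.comp_snd
      (ae_of_all _ fun z => ((σ z.2).norm_map f).le)
  have hinner : ∀ g, k₁ g • σ g (∫ g', k₂ g' • σ g' f) =
      ∫ g', (k₁ g * k₂ (heisMul (heisInv g) g')) • σ g' f := fun g => by
    let e : (ℝ × ℝ × ℝ) ≃ᵐ (ℝ × ℝ × ℝ) :=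
      { toFun := heisMul (heisInv g)
        invFun := heisMul g
        left_inv := heisMul_heisInv_cancel_left g
        right_inv := heisInv_heisMul_cancel_left g
        measurable_toFun := (measurePreserving_heisMul_left _).measurable
        measurable_invFun := (measurePreserving_heisMul_left _).measurable }
    have hcomm : σ g (∫ g', k₂ g' • σ g' f) = ∫ g', σ g (k₂ g' • σ g' f) :=
      ((σ g).toContinuousLinearEquiv.toContinuousLinearMap.integral_comp_comm hint₂).symm
    have hsub := (show MeasurePreserving e volume volume from
      measurePreserving_heisMul_left _).integral_comp' (fun g' => σ g (k₂ g' • σ g' f))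
    rw [hcomm, ← hsub, ← integral_smul]
    refine integral_congr_ae (ae_of_all _ fun g' => ?_)
    change k₁ g • σ g (k₂ (heisMul (heisInv g) g') • σ (heisMul (heisInv g) g') f) = _
    rw [map_smul, hσ.apply_heisMul hℏ, heisMul_heisInv_cancel_left, smul_smul]
  simp_rw [hinner]
  rw [integral_integral_swap
    (f := fun g g' => (k₁ g * k₂ (heisMul (heisInv g) g')) • σ g' f) hprod]
  simp_rw [integral_smul_const, heisConv]

/-- The image of the p-mechanical bracket under the
Schrödinger representation is a scalar multiple of the operator commutator: for
Schwartz `k₁, k₂`, the antiderivative `A(k₁*k₂ − k₂*k₁)` is integrable on `ℝ³`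
and `σ_ℏ(A(k₁*k₂ − k₂*k₁))f = −(2iℏ)⁻¹·(σ_ℏ(k₁)(σ_ℏ(k₂)f) − σ_ℏ(k₂)(σ_ℏ(k₁)f))`
for every `f ∈ L²(ℝ,ℂ)`, where `σ_ℏ(k)f = ∫_{ℝ³} k(g)·(σ_ℏ(g)f) dg`. -/
theorem pmechanical_bracket_gives_quantum_commutator
    (ℏ : ℝ) (hℏ : 0 < ℏ)
    (σ : ℝ × ℝ × ℝ → (Lp ℂ 2 (volume : Measure ℝ) ≃ₗᵢ[ℂ] Lp ℂ 2 (volume : Measure ℝ)))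
    (hσ : ∀ (s x y : ℝ) (f : Lp ℂ 2 (volume : Measure ℝ)),
      (σ (s, x, y) f : ℝ → ℂ) =ᵐ[volume] fun t : ℝ =>
        Complex.exp (Complex.I *
            ((2 * s * ℏ - Real.sqrt (2 * ℏ) * y * t + ℏ * x * y : ℝ) : ℂ)) *
          (f : ℝ → ℂ) (t - Real.sqrt (2 * ℏ) * x))
    (k₁ k₂ : SchwartzMap (ℝ × ℝ × ℝ) ℂ) :
    Integrable (heisAnti (heisComm (⇑k₁) (⇑k₂))) (volume : Measure (ℝ × ℝ × ℝ)) ∧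
    ∀ f : Lp ℂ 2 (volume : Measure ℝ),
      ∫ g : ℝ × ℝ × ℝ, heisAnti (heisComm (⇑k₁) (⇑k₂)) g • (σ g f) =
        (-(2 * Complex.I * (ℏ : ℂ))⁻¹) •
          ((∫ g : ℝ × ℝ × ℝ, k₁ g • σ g (∫ g' : ℝ × ℝ × ℝ, k₂ g' • σ g' f)) -
            ∫ g : ℝ × ℝ × ℝ, k₂ g • σ g (∫ g' : ℝ × ℝ × ℝ, k₁ g' • σ g' f)) := by
  have hS : IsSchrodinger ℏ σ := hσ
  have m₁ := k₁.integrableFirstMoments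
  have m₂ := k₂.integrableFirstMoments
  have h₁₂ := integrable_heisConv m₁.integrable m₂.integrable
  have h₂₁ := integrable_heisConv m₂.integrable m₁.integrable
  have hC : Integrable (heisComm k₁ k₂) := h₁₂.sub h₂₁
  have hsC : Integrable fun g => (g.1 : ℂ) * heisComm k₁ k₂ g :=
    ((integrable_fst_mul_heisConv m₁ m₂).sub (integrable_fst_mul_heisConv m₂ m₁)).congr
      (ae_of_all _ fun g => (mul_sub _ _ _).symm)
  have h0 := ae_integral_heisComm_fst_eq_zero m₁.integrable m₂.integrable
  refine ⟨integrable_heisAnti hC hsC h0, fun f => ?_⟩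
  have hmeas := (hS.stronglyMeasurable f).aestronglyMeasurable (μ := volume)
  have hle : ∀ g, ‖σ g f‖ ≤ ‖f‖ := fun g => ((σ g).norm_map f).le
  have hω : 2 * Complex.I * (ℏ : ℂ) ≠ 0 := by simp [hℏ.ne']
  refine (integral_heisAnti_smul hC hsC h0 hmeas hle hω (hS.apply_central f)).trans ?_
  rw [hS.integral_heisConv hℏ.le m₁.integrable m₂.integrable,
    hS.integral_heisConv hℏ.le m₂.integrable m₁.integrable]
  have hint : ∀ {k : ℝ × ℝ × ℝ → ℂ}, Integrable k → Integrable fun g => k g • σ g f :=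
    fun hk => hk.smul_bdd ‖f‖ hmeas (ae_of_all _ hle)
  simp_rw [heisComm, sub_smul]
  exact congrArg _ (integral_sub (hint h₁₂) (hint h₂₁))
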